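/- Let V be a finite set, let A be a symmetric V × V matrix over GF(2) (a graph with loops), and let u ∈ V with A_{uu} = 1 (u has a loop). Then for every Y ⊆ V, det((A*u)[Y]) = det(A[Y ⊕ {u}]) over GF(2), where ⊕ is symmetric difference. -/

import Mathlib

set_option linter.unusedSectionVars false

variable {V : Type*} [Fintype V] [DecidableEq V]

/-- Principal submatrix with rows and columns indexed by `S`. -/
def psub (A : Matrix V V (ZMod 2)) (S : Finset V) : Matrix S S (ZMod 2) :=
  A.submatrix (fun i : S => (i : V)) (fun j : S => (j : V))

/-- Local complementation at a looped vertex `u` of a graph with loops,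
identified with its symmetric adjacency matrix over GF(2):
`(A*u)_{xy} = A_{xy} + A_{xu}·A_{uy}` for `x, y ≠ u`, entries in row/column `u` unchanged. -/
def matLC (A : Matrix V V (ZMod 2)) (u : V) : Matrix V V (ZMod 2) :=
  fun x y => if x = u ∨ y = u then A x y else A x y + A x u * A u y

/-- `s_A(x,y)` : `x = y` or `A_{xy} = 1`. -/
def matNbr (A : Matrix V V (ZMod 2)) (x y : V) : Prop := x = y ∨ A x y = 1

/-- Pivot `A[uv]` on an edge `{u,v}` between two loop-free vertices of a graph with loops:
same diagonal as `A`, and for `x ≠ y`,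
`(A[uv])_{xy} = A_{xy} XOR (s_A(x,u) ∧ s_A(y,v)) XOR (s_A(x,v) ∧ s_A(y,u))`. -/
noncomputable def matPivotEdge (A : Matrix V V (ZMod 2)) (u v : V) : Matrix V V (ZMod 2) := by
  classical
  exact fun x y =>
    if x = y then A x y
    else A x y + (if matNbr A x u ∧ matNbr A y v then 1 else 0)
               + (if matNbr A x v ∧ matNbr A y u then 1 else 0)

/-- Apply a sequence of mixed operations (left to right): `Sum.inl u` is the local
complementation `*u`, `Sum.inr (u,v)` is the pivot `[uv]`. -/
noncomputable def applyOps (A : Matrix V V (ZMod 2)) : List (V ⊕ V × V) → Matrix V V (ZMod 2)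
  | [] => A
  | (Sum.inl u) :: φ => applyOps (matLC A u) φ
  | (Sum.inr p) :: φ => applyOps (matPivotEdge A p.1 p.2) φ

/-- A mixed sequence is applicable when each operation's defining condition holds in the
matrix obtained by applying all preceding operations: `*u` needs a loop at `u`, and `[uv]`
needs `u ≠ v`, both loop-free, and `A_{uv} = 1`. -/
def OpsApplicable (A : Matrix V V (ZMod 2)) : List (V ⊕ V × V) → Prop
  | [] => True
  | (Sum.inl u) :: φ => A u u = 1 ∧ OpsApplicable (matLC A u) φ
  | (Sum.inr p) :: φ => p.1 ≠ p.2 ∧ A p.1 p.1 = 0 ∧ A p.2 p.2 = 0 ∧ A p.1 p.2 = 1 ∧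
      OpsApplicable (matPivotEdge A p.1 p.2) φ

/-- The list of vertex occurrences of a mixed sequence: `*u` contributes one occurrence
of `u`, `[uv]` one occurrence each of `u` and `v`. -/
def opsVertices (φ : List (V ⊕ V × V)) : List V :=
  φ.flatMap fun o => match o with | Sum.inl u => [u] | Sum.inr p => [p.1, p.2]

/-- The support of a mixed sequence: vertices occurring an odd number of times. -/
def opsSupport (φ : List (V ⊕ V × V)) : Finset V :=
  Finset.univ.filter fun x => Odd ((opsVertices φ).count x)

/-- Over GF(2), local complementation at a fixed vertex is an involution on looped graphs. -/
theorem matLC_matLC (A : Matrix V V (ZMod 2)) (u : V) : matLC (matLC A u) u = A := by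
  ext x y
  by_cases h : x = u ∨ y = u
  · simp [matLC, h]
  · simp [matLC, h, add_assoc, CharTwo.add_self_eq_zero]

/-- Schur complement with respect to a looped vertex outside `Z`. -/
theorem det_psub_insert (A : Matrix V V (ZMod 2)) {u : V} (hu : A u u = 1) {Z : Finset V}
    (hZ : u ∉ Z) : (psub A (insert u Z)).det = (psub (matLC A u) Z).det := by
  let e : Z ⊕ Unit ≃ (insert u Z : Finset V) :=
    ((Finset.subtypeInsertEquivOption hZ).trans (Equiv.optionEquivSumPUnit Z)).symm
  have hblocks : (psub A (insert u Z)).submatrix e e =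
      Matrix.fromBlocks (psub A Z) (Matrix.of fun (i : Z) (_ : Unit) => A i u)
        (Matrix.of fun (_ : Unit) (j : Z) => A u j) 1 := by
    ext (i | i) (j | j) <;>
      simp [e, psub, Finset.subtypeInsertEquivOption, hu]
  rw [← Matrix.det_submatrix_equiv_self e, hblocks, Matrix.det_fromBlocks_one₂₂]
  congr 1
  ext i j
  have hi : (i : V) ≠ u := fun h => hZ (h ▸ i.2)
  have hj : (j : V) ≠ u := fun h => hZ (h ▸ j.2)
  simp [psub, matLC, hi, hj, Matrix.mul_apply, CharTwo.sub_eq_add]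

/-- for a graph with loops `A` and a looped vertex `u`,
`det((A*u)[Y]) = det(A[Y ⊕ {u}])` over GF(2) for every `Y ⊆ V`. -/
theorem det_matLC (A : Matrix V V (ZMod 2)) (hA : A.IsSymm) (u : V) (hu : A u u = 1)
    (Y : Finset V) :
    (psub (matLC A u) Y).det = (psub A (symmDiff Y {u})).det := by
  by_cases huY : u ∈ Y
  · have hsymm : symmDiff Y {u} = Y.erase u := by
      ext x
      by_cases hx : x = u <;> simp [Finset.mem_symmDiff, hx, huY]
    have hloop : matLC A u u u = 1 := by simp [matLC, hu]
    have hdet := det_psub_insert (matLC A u) hloop (Finset.notMem_erase u Y)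
    rwa [matLC_matLC, Finset.insert_erase huY, ← hsymm] at hdet
  · have hsymm : symmDiff Y {u} = insert u Y := by
      ext x
      by_cases hx : x = u <;> simp [Finset.mem_symmDiff, hx, huY]
    rw [hsymm, det_psub_insert A hu huY]
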